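/- arXiv:1505.04602 — 6 statements merged into one kernel-verified Lean document; each statement's English description precedes it below -/
import Mathlib

section
/- Let n ≥ 3 and let G be a simple graph on Fin n. Then G is Hamiltonian (i.e., G contains a cycle passing through every vertex) if and only if there exists a subset S of the edge set of G with |S| = n such that {χ(e) : e ∈ S} is reduced and ∑_{e ∈ S} χ(e) = 0. -/
/-- The coding vector of an unordered pair of vertices of `Fin n`:
for `e = {i,j}` with `i < j`, coordinate `k` is `1` iff `i ≤ k < j`. -/
def chi (n : ℕ) : Sym2 (Fin n) → (Fin (n - 1) → ZMod 2) :=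
  Sym2.lift ⟨fun i j k => if min i.val j.val ≤ k.val ∧ k.val < max i.val j.val then 1 else 0,
    fun i j => by funext k; dsimp only; rw [min_comm, max_comm]⟩

/-- `Cseg N` is the set of nonzero vectors of `Fin N → ZMod 2` whose support is an
interval of consecutive indices (the consecutive 1's property). -/
def Cseg (N : ℕ) : Set (Fin N → ZMod 2) :=
  {v | v ≠ 0 ∧ ∃ a b : ℕ, ∀ k : Fin N, v k = 1 ↔ a ≤ k.val ∧ k.val < b}

/-- A finite set of vectors is reduced if it is nonempty and every nonempty proper
subset has nonzero sum. -/
def IsReducedSet {N : ℕ} (S : Finset (Fin N → ZMod 2)) : Prop :=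
  S.Nonempty ∧ ∀ A : Finset (Fin N → ZMod 2), A ⊂ S → A.Nonempty → ∑ v ∈ A, v ≠ 0

/-!
The coordinates of `χ(e)` are the coboundaries, evaluated at `e`, of the indicator functions of the
initial segments of `Fin n`. By telescoping, these span all coboundaries over `ZMod 2`, so a set of
pairs has coding vectors summing to zero exactly when it lies in the cycle space. Since `χ` is
injective on edges, a reduced set of coding vectors with zero sum is therefore a minimal nonempty
element of the cycle space of `G`, and these are the edge sets of the cycles of `G`. A cycle is
Hamiltonian when it has `n` edges.
-/

section CycleSpace

variable {V : Type*} {G : SimpleGraph V} {B C : Finset (Sym2 V)}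

/-- The simplicial coboundary of a 0-cochain over `ZMod 2`; for the indicator function of a set of
vertices, it is the indicator function of the pairs leaving that set. -/
def coboundary (φ : V → ZMod 2) : Sym2 V → ZMod 2 :=
  Sym2.lift ⟨fun u v => φ u + φ v, fun _ _ => add_comm _ _⟩

theorem coboundary_mk (φ : V → ZMod 2) (u v : V) : coboundary φ s(u, v) = φ u + φ v := rfl

theorem eq_of_coboundary_eq {e f : Sym2 V} (he : ¬ e.IsDiag) (hf : ¬ f.IsDiag)
    (h : ∀ φ, coboundary φ e = coboundary φ f) : e = f := by
  classical
  have coboundary_single : ∀ {g : Sym2 V} (u : V), ¬ g.IsDiag →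
      (coboundary (Pi.single u 1) g = 1 ↔ u ∈ g) := by
    intro g u hg
    induction g using Sym2.ind with | _ a b
    have hab : a ≠ b := hg
    simp only [coboundary_mk, Sym2.mem_iff, Pi.single_apply]
    grind
  refine Sym2.ext fun u => ?_
  rw [← coboundary_single u he, h, coboundary_single u hf]

/-- Membership in the cycle space over `ZMod 2`, which we encode as the orthogonal complement of
the coboundaries; evaluating on indicators of single vertices, every vertex has even degree. -/
def InCycleSpace (B : Finset (Sym2 V)) : Prop :=
  ∀ φ : V → ZMod 2, ∑ e ∈ B, coboundary φ e = 0

theorem sum_coboundary_edges (φ : V → ZMod 2) {u v : V} (w : G.Walk u v) :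
    (w.edges.map (coboundary φ)).sum = φ u + φ v := by
  induction w with
  | nil => simp [CharTwo.add_self_eq_zero]
  | cons h p ih =>
    rw [SimpleGraph.Walk.edges_cons, List.map_cons, List.sum_cons, ih, coboundary_mk, add_assoc,
      CharTwo.add_cancel_left]

theorem InCycleSpace.sdiff [DecidableEq V] (hB : InCycleSpace B) (hC : InCycleSpace C)
    (hCB : C ⊆ B) : InCycleSpace (B \ C) := fun φ => by
  rw [Finset.sum_sdiff_eq_sub hCB, hB φ, hC φ, sub_zero]

/-- An element of the cycle space meets every cut in an even number of pairs. -/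
theorem InCycleSpace.exists_crossing_ne (hB : InCycleSpace B) {A : Set V} {a b : V}
    (ha : a ∈ A) (hb : b ∉ A) (hab : s(a, b) ∈ B) :
    ∃ c ∈ A, ∃ d ∉ A, s(c, d) ∈ B ∧ s(c, d) ≠ s(a, b) := by
  classical
  by_contra! h
  refine one_ne_zero (α := ZMod 2) ?_
  calc (1 : ZMod 2)
      = coboundary (A.indicator 1) s(a, b) := by simp [coboundary_mk, ha, hb]
    _ = ∑ e ∈ B, coboundary (A.indicator 1) e := (Finset.sum_eq_single_of_mem _ hab ?_).symm
    _ = 0 := hB _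
  intro e he hne
  induction e using Sym2.ind with | _ c d
  by_cases hc : c ∈ A <;> by_cases hd : d ∈ A
  · simp [coboundary_mk, hc, hd, CharTwo.add_self_eq_zero]
  · exact absurd (h c hc d hd he) hne
  · rw [Sym2.eq_swap] at he hne
    exact absurd (h d hd c hc he) hne
  · simp [coboundary_mk, hc, hd]

theorem InCycleSpace.eq_empty_of_subset_path (hB : InCycleSpace B) {u v : V} {p : G.Walk u v}
    (hp : p.IsPath) (hBp : ∀ e ∈ B, e ∈ p.edges) : B = ∅ := by
  induction p with
  | nil => exact Finset.eq_empty_of_forall_notMem fun e he => by simpa using hBp e he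
  | @cons a b c h p ih =>
    obtain ⟨hp, ha⟩ := (SimpleGraph.Walk.cons_isPath_iff h p).1 hp
    have mem_tail : ∀ e ∈ B, e ≠ s(a, b) → e ∈ p.edges := fun e he hne =>
      (List.mem_cons.1 (hBp e he)).resolve_left hne
    have first_notMem : s(a, b) ∉ B := fun hab => by
      obtain ⟨_, rfl, d, -, hd, hne⟩ :=
        hB.exists_crossing_ne (Set.mem_singleton a) (by simpa using h.ne') hab
      exact ha (p.fst_mem_support_of_mem_edges (mem_tail _ hd hne))
    exact ih hp fun e he => mem_tail e he (ne_of_mem_of_not_mem he first_notMem)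

theorem InCycleSpace.exists_isCycle_mem_edges (hB : InCycleSpace B) (hBG : ↑B ⊆ G.edgeSet)
    {e : Sym2 V} (he : e ∈ B) :
    ∃ (u : V) (w : G.Walk u u), w.IsCycle ∧ e ∈ w.edges ∧ ∀ f ∈ w.edges, f ∈ B := by
  induction e using Sym2.ind with | _ a b
  let H := SimpleGraph.fromEdgeSet (B : Set (Sym2 V))
  have hH : ∀ {c d}, H.Adj c d ↔ s(c, d) ∈ B := fun {c d} =>
    ⟨fun h => h.1, fun h => ⟨h, G.ne_of_adj (hBG h)⟩⟩
  have hHG : H ≤ G := fun _ _ h => hBG (hH.1 h)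
  -- Otherwise `s(a, b)` would be the only pair leaving the component of `a` in `H - s(a, b)`.
  have hreach : (H \ SimpleGraph.fromEdgeSet {s(a, b)}).Reachable a b := by
    by_contra hb
    obtain ⟨c, hc, d, hd, hcd, hne⟩ := hB.exists_crossing_ne
      (A := {x | (H \ SimpleGraph.fromEdgeSet {s(a, b)}).Reachable a x}) .rfl hb he
    exact hd (hc.trans (SimpleGraph.Adj.reachable ⟨hH.2 hcd, fun h => hne h.1⟩))
  obtain ⟨u, w, hw, hew⟩ :=
    SimpleGraph.adj_and_reachable_delete_edges_iff_exists_cycle.1 ⟨hH.2 he, hreach⟩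
  refine ⟨u, w.mapLe hHG, hw.mapLe hHG, ?_⟩
  rw [SimpleGraph.Walk.edges_mapLe_eq_edges]
  refine ⟨hew, fun f hf => ?_⟩
  induction f using Sym2.ind with | _ c d
  exact hH.1 (w.adj_of_mem_edges hf)

variable [DecidableEq V]

theorem inCycleSpace_edges_of_isTrail {u : V} {w : G.Walk u u} (hw : w.IsTrail) :
    InCycleSpace w.edges.toFinset := fun φ => by
  rw [List.sum_toFinset _ hw.edges_nodup, sum_coboundary_edges, CharTwo.add_self_eq_zero]

theorem InCycleSpace.eq_edges_of_subset_cycle (hB : InCycleSpace B) (hne : B.Nonempty) {u : V}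
    {w : G.Walk u u} (hw : w.IsCycle) (hBw : B ⊆ w.edges.toFinset) : B = w.edges.toFinset := by
  -- Of `B` and its complement in the cycle, one avoids the first edge and so lies in a path.
  have hcompl := (inCycleSpace_edges_of_isTrail hw.isTrail).sdiff hB hBw
  cases w with
  | nil => exact absurd rfl hw.ne_nil
  | @cons _ v _ h p =>
    have hp : p.IsPath := ((SimpleGraph.Walk.cons_isCycle_iff p h).1 hw).1
    have mem_tail : ∀ e ∈ (SimpleGraph.Walk.cons h p).edges.toFinset, e ≠ s(u, v) → e ∈ p.edges :=
      fun e he hne => (List.mem_cons.1 (List.mem_toFinset.1 he)).resolve_left hne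
    by_cases huv : s(u, v) ∈ B
    · refine hBw.antisymm (Finset.sdiff_eq_empty_iff_subset.1 ?_)
      refine hcompl.eq_empty_of_subset_path hp fun e he => ?_
      rw [Finset.mem_sdiff] at he
      exact mem_tail e he.1 (ne_of_mem_of_not_mem huv he.2).symm
    · refine absurd (hB.eq_empty_of_subset_path hp fun e he => ?_) hne.ne_empty
      exact mem_tail e (hBw he) (ne_of_mem_of_not_mem he huv)

theorem minimal_inCycleSpace_iff_exists_isCycle (hBG : ↑B ⊆ G.edgeSet) :
    Minimal (fun C => C.Nonempty ∧ InCycleSpace C) B ↔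
      ∃ (u : V) (w : G.Walk u u), w.IsCycle ∧ w.edges.toFinset = B := by
  have nonempty_edges : ∀ {u : V} {w : G.Walk u u}, w.IsCycle → w.edges.toFinset.Nonempty :=
    fun hw => by simpa [List.toFinset_nonempty_iff, SimpleGraph.Walk.edges_eq_nil] using hw.not_nil
  constructor
  · intro hmin
    obtain ⟨e, he⟩ := hmin.prop.1
    obtain ⟨u, w, hw, -, hwB⟩ := hmin.prop.2.exists_isCycle_mem_edges hBG he
    refine ⟨u, w, hw, hmin.eq_of_le ?_ fun f hf => hwB f (List.mem_toFinset.1 hf)⟩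
    exact ⟨nonempty_edges hw, inCycleSpace_edges_of_isTrail hw.isTrail⟩
  · rintro ⟨u, w, hw, rfl⟩
    refine ⟨⟨nonempty_edges hw, inCycleSpace_edges_of_isTrail hw.isTrail⟩, fun C hC hCw => ?_⟩
    exact (hC.2.eq_edges_of_subset_cycle hC.1 hw hCw).ge

end CycleSpace

theorem isReducedSet_image_and_sum_eq_zero_iff {α : Type*} {N : ℕ} {f : α → Fin N → ZMod 2}
    {S : Finset α} (hf : Set.InjOn f S) :
    IsReducedSet (S.image f) ∧ ∑ e ∈ S, f e = 0 ↔
      Minimal (fun B : Finset α => B.Nonempty ∧ ∑ e ∈ B, f e = 0) S := by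
  classical
  have sum_image : ∀ {B}, B ⊆ S → ∑ v ∈ B.image f, v = ∑ e ∈ B, f e := fun hB =>
    Finset.sum_image (hf.mono (Finset.coe_subset.2 hB))
  constructor
  · rintro ⟨⟨hne, hred⟩, hsum⟩
    refine ⟨⟨Finset.image_nonempty.1 hne, hsum⟩, fun B hB hBS => ?_⟩
    by_contra hSB
    have image_ssubset : B.image f ⊂ S.image f := by
      refine ⟨Finset.image_subset_image hBS, fun h => hSB ?_⟩
      rw [← Finset.coe_subset, Finset.coe_image, Finset.coe_image] at h
      exact (hf.image_subset_image_iff subset_rfl (Finset.coe_subset.2 hBS)).1 h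
    exact hred _ image_ssubset (hB.1.image f) (by rw [sum_image hBS, hB.2])
  · rintro ⟨⟨hne, hsum⟩, hmin⟩
    refine ⟨⟨hne.image f, fun A hA hAne hA0 => ?_⟩, hsum⟩
    obtain ⟨B, hBS, rfl⟩ := Finset.subset_image_iff.1 hA.subset
    replace hBS : B ⊆ S := Finset.coe_subset.1 hBS
    refine hA.not_subset (Finset.image_subset_image (hmin ⟨?_, ?_⟩ hBS))
    · exact Finset.image_nonempty.1 hAne
    · rw [← sum_image hBS, hA0]

section CodingVector

variable {n : ℕ}

theorem chi_apply_eq_coboundary (e : Sym2 (Fin n)) (k : Fin (n - 1)) :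
    chi n e k = coboundary (fun v => if v.val ≤ k.val then 1 else 0) e := by
  induction e using Sym2.ind with | _ i j
  have := CharTwo.add_self_eq_zero (1 : ZMod 2)
  simp only [chi, Sym2.lift_mk, coboundary_mk]
  grind

theorem coboundary_eq_sum_chi (φ : Fin n → ZMod 2) (e : Sym2 (Fin n)) :
    coboundary φ e = ∑ k : Fin (n - 1),
      chi n e k * (φ ⟨k + 1, by omega⟩ - φ ⟨k, by omega⟩) := by
  induction e using Sym2.ind with | _ i j
  wlog hij : i ≤ j generalizing i j
  · rw [Sym2.eq_swap]
    exact this j i (le_of_not_ge hij)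
  let ψ : ℕ → ZMod 2 := fun k => if hk : k < n then φ ⟨k, hk⟩ else 0
  have hψ : ∀ {k} (hk : k < n), ψ k = φ ⟨k, hk⟩ := fun hk => dif_pos hk
  calc coboundary φ s(i, j)
      = ψ j - ψ i := by rw [coboundary_mk, hψ i.2, hψ j.2, CharTwo.sub_eq_add, add_comm]
    _ = ∑ k ∈ Finset.Ico i.val j.val, (ψ (k + 1) - ψ k) := (Finset.sum_Ico_sub ψ hij).symm
    _ = ∑ k ∈ Finset.range (n - 1),
          if i.val ≤ k ∧ k < j.val then ψ (k + 1) - ψ k else 0 := by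
        rw [← Finset.sum_filter]
        congr 1
        ext k
        simp only [Finset.mem_Ico, Finset.mem_filter, Finset.mem_range]
        omega
    _ = ∑ k : Fin (n - 1), chi n s(i, j) k * (φ ⟨k + 1, by omega⟩ - φ ⟨k, by omega⟩) := by
        rw [Finset.sum_range]
        refine Finset.sum_congr rfl fun k _ => ?_
        rw [hψ (show k + 1 < n by omega), hψ (show k < n by omega), chi, Sym2.lift_mk]
        simp only [min_eq_left (Fin.le_def.1 hij), max_eq_right (Fin.le_def.1 hij), ite_mul,
          one_mul, zero_mul]

theorem sum_chi_eq_zero_iff_inCycleSpace {B : Finset (Sym2 (Fin n))} :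
    ∑ e ∈ B, chi n e = 0 ↔ InCycleSpace B := by
  constructor
  · intro h φ
    simp only [coboundary_eq_sum_chi φ]
    rw [Finset.sum_comm]
    refine Finset.sum_eq_zero fun k _ => ?_
    rw [← Finset.sum_mul, ← Finset.sum_apply, h, Pi.zero_apply, zero_mul]
  · intro h
    ext k
    simp only [Finset.sum_apply, chi_apply_eq_coboundary, h _, Pi.zero_apply]

theorem chi_injOn_not_isDiag : Set.InjOn (chi n) {e | ¬ e.IsDiag} := fun e he f hf h =>
  eq_of_coboundary_eq he hf fun φ => by rw [coboundary_eq_sum_chi, h, ← coboundary_eq_sum_chi]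

end CodingVector

theorem isReducedSet_image_chi_and_sum_eq_zero_iff_exists_isCycle {n : ℕ}
    {G : SimpleGraph (Fin n)} {S : Finset (Sym2 (Fin n))} (hSG : ↑S ⊆ G.edgeSet) :
    IsReducedSet (S.image (chi n)) ∧ ∑ e ∈ S, chi n e = 0 ↔
      ∃ (v : Fin n) (w : G.Walk v v), w.IsCycle ∧ w.edges.toFinset = S := by
  rw [isReducedSet_image_and_sum_eq_zero_iff
    (chi_injOn_not_isDiag.mono fun _ he => G.not_isDiag_of_mem_edgeSet (hSG he))]
  simp only [sum_chi_eq_zero_iff_inCycleSpace]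
  exact minimal_inCycleSpace_iff_exists_isCycle hSG

theorem isHamiltonianCycle_iff_isCycle_and_card_edges_eq {V : Type*} [Fintype V] [DecidableEq V]
    {G : SimpleGraph V} {v : V} {w : G.Walk v v} :
    w.IsHamiltonianCycle ↔ w.IsCycle ∧ w.edges.toFinset.card = Fintype.card V := by
  rw [SimpleGraph.Walk.isHamiltonianCycle_iff_isCycle_and_length_eq]
  refine and_congr_right fun hw => ?_
  rw [List.toFinset_card_of_nodup hw.edges_nodup, SimpleGraph.Walk.length_edges]

theorem stmt2 (n : ℕ) (hn : 3 ≤ n) (G : SimpleGraph (Fin n)) :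
    (∃ (v : Fin n) (w : G.Walk v v), w.IsHamiltonianCycle) ↔
      ∃ S : Finset (Sym2 (Fin n)), ↑S ⊆ G.edgeSet ∧ S.card = n ∧
        IsReducedSet (S.image (chi n)) ∧ ∑ e ∈ S, chi n e = 0 := by
  simp only [isHamiltonianCycle_iff_isCycle_and_card_edges_eq, Fintype.card_fin]
  constructor
  · rintro ⟨v, w, hw, hcard⟩
    have hwG : ↑w.edges.toFinset ⊆ G.edgeSet := fun e he =>
      w.edges_subset_edgeSet (List.mem_toFinset.1 he)
    exact ⟨w.edges.toFinset, hwG, hcard,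
      (isReducedSet_image_chi_and_sum_eq_zero_iff_exists_isCycle hwG).2 ⟨v, w, hw, rfl⟩⟩
  · rintro ⟨S, hSG, hcard, hS⟩
    obtain ⟨v, w, hw, rfl⟩ :=
      (isReducedSet_image_chi_and_sum_eq_zero_iff_exists_isCycle hSG).1 hS
    exact ⟨v, w, hw, hcard⟩
end

section
/- Let n ≥ 2 and let G be a simple graph on Fin n with at most one nontrivial connected component (i.e., any two vertices of positive degree are connected by a walk in G). Then G is Eulerian (i.e., there exists a closed walk in G that traverses every edge of G exactly once) if and only if ∑_{e ∈ E(G)} χ(e) = 0 in (Fin (n-1) → ZMod 2). -/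
/-!
Modulo 2, the vector `χ {i, j}` is the sum of the indicators of `{k | i ≤ k}` and `{k | j ≤ k}`, so
the `k`-th coordinate of `∑ χ e` is the sum of the degrees of the vertices `v ≤ k`. These partial
sums determine the parities of all degrees (the one up to the last vertex is not a coordinate, but
it vanishes by the handshaking lemma), so `∑ χ e = 0` says exactly that every degree is even, and
Euler's theorem applies. For the latter, a trail of maximal length uses every edge at its endpoints;
even degrees force it to be closed, and rotating it shows that it uses every edge at each of its
vertices, hence every edge of the component containing it.
-/

section LongestTrail

open SimpleGraph

variable {V : Type*} {G : SimpleGraph V} {u v x y : V}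

/-- A trail of maximal length among all trails of `G`, whatever their endpoints. -/
def IsLongestTrail (p : G.Walk u v) : Prop :=
  p.IsTrail ∧ ∀ ⦃x y : V⦄ (q : G.Walk x y), q.IsTrail → q.length ≤ p.length

namespace IsLongestTrail

theorem mem_edges_of_adj_start {p : G.Walk u v} (hp : IsLongestTrail p) (h : G.Adj u x) :
    s(u, x) ∈ p.edges := by
  by_contra hmem
  have hcons : (Walk.cons h.symm p).IsTrail :=
    (Walk.isTrail_cons h.symm p).mpr ⟨hp.1, Sym2.eq_swap (a := u) ▸ hmem⟩
  have hle := hp.2 _ hcons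
  rw [Walk.length_cons] at hle
  exact Nat.not_succ_le_self _ hle

theorem exists_adj_start {p : G.Walk u v} (hp : IsLongestTrail p) (h : G.Adj x y) :
    ∃ z, G.Adj u z := by
  have hpos : 1 ≤ p.length := hp.2 h.toWalk (Walk.IsPath.of_adj h).isTrail
  exact ⟨p.snd, p.adj_snd (Walk.not_nil_iff_lt_length.mpr hpos)⟩

theorem rotate [DecidableEq V] {p : G.Walk u u} (hp : IsLongestTrail p) (hx : x ∈ p.support) :
    IsLongestTrail (p.rotate x hx) :=
  ⟨hp.1.rotate hx, fun _ _ q hq ↦ (hp.2 q hq).trans_eq (p.length_rotate x hx).symm⟩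

theorem mem_edges_of_mem_support {p : G.Walk u u} (hp : IsLongestTrail p) (hx : x ∈ p.support)
    (h : G.Adj x y) : s(x, y) ∈ p.edges := by
  classical
  exact (p.rotate_edges x hx).mem_iff.mp ((hp.rotate hx).mem_edges_of_adj_start h)

theorem mem_support_of_reachable {p : G.Walk u u} (hp : IsLongestTrail p) (h : G.Reachable u x) :
    x ∈ p.support := by
  by_contra hx
  obtain ⟨q⟩ := h
  obtain ⟨d, -, hfst, hsnd⟩ := q.exists_boundary_dart {z | z ∈ p.support} p.start_mem_support hx
  exact hsnd (p.snd_mem_support_of_mem_edges (hp.mem_edges_of_mem_support hfst d.adj))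

theorem isEulerian [DecidableEq V] {p : G.Walk u u} (hp : IsLongestTrail p)
    (hG : ∀ ⦃x y⦄, G.Adj x y → G.Reachable u x) : p.IsEulerian := by
  refine hp.1.isEulerian_of_forall_mem fun e he ↦ ?_
  induction e with | _ x y =>
  exact hp.mem_edges_of_mem_support (hp.mem_support_of_reachable (hG he)) he

end IsLongestTrail

theorem countP_mem_edges_eq_degree [DecidableEq V] [Fintype (G.neighborSet x)] {p : G.Walk u v}
    (hp : p.IsTrail) (h : ∀ y, G.Adj x y → s(x, y) ∈ p.edges) :
    p.edges.countP (x ∈ ·) = G.degree x := by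
  rw [List.countP_eq_length_filter, ← List.toFinset_card_of_nodup (hp.edges_nodup.filter _),
    ← G.card_incidenceFinset_eq_degree]
  congr 1
  ext e
  simp only [List.mem_toFinset, List.mem_filter, decide_eq_true_eq, mem_incidenceFinset]
  refine ⟨fun ⟨he, hx⟩ ↦ ⟨p.edges_subset_edgeSet he, hx⟩, fun ⟨he, hx⟩ ↦ ⟨?_, hx⟩⟩
  obtain ⟨y, rfl⟩ := Sym2.mem_iff_exists.mp hx
  exact h y he

theorem IsLongestTrail.start_eq_end_of_even_degree [Fintype (G.neighborSet u)] {p : G.Walk u v}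
    (hp : IsLongestTrail p) (h : Even (G.degree u)) : u = v := by
  classical
  rw [← countP_mem_edges_eq_degree hp.1 fun _ ↦ hp.mem_edges_of_adj_start,
    hp.1.even_countP_edges_iff] at h
  by_contra huv
  exact (h huv).1 rfl

theorem exists_isEulerian_iff_forall_even_degree [DecidableEq V] [Nonempty V] [Finite G.edgeSet]
    [G.LocallyFinite] (hG : ∀ x y, (∃ z, G.Adj x z) → (∃ z, G.Adj y z) → G.Reachable x y) :
    (∃ (v : V) (p : G.Walk v v), p.IsEulerian) ↔ ∀ x, Even (G.degree x) := by
  constructor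
  · rintro ⟨v, p, hp⟩ x
    rw [← countP_mem_edges_eq_degree hp.isTrail fun _ h ↦ hp.mem_edges_iff.mpr h,
      hp.isTrail.even_countP_edges_iff]
    exact fun hne ↦ absurd rfl hne
  · intro heven
    obtain ⟨u, v, p, hp, hmax⟩ := Walk.exists_isTrail_forall_isTrail_length_le_length G
    have hlongest : IsLongestTrail p := ⟨hp, hmax⟩
    obtain rfl := hlongest.start_eq_end_of_even_degree (heven u)
    exact ⟨u, p, hlongest.isEulerian fun x y hxy ↦
      hG u x (hlongest.exists_adj_start hxy) ⟨y, hxy⟩⟩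

end LongestTrail

section Sums

open Finset

theorem forall_sum_Iic_eq_zero_iff {α M : Type*} [PartialOrder α] [LocallyFiniteOrderBot α]
    [AddCommMonoid M] (f : α → M) : (∀ a, ∑ b ∈ Iic a, f b = 0) ↔ ∀ a, f a = 0 := by
  refine ⟨fun h a ↦ ?_, fun h a ↦ sum_eq_zero fun b _ ↦ h b⟩
  have : WellFoundedLT α := StrictMono.wellFoundedLT (f := (Iic : α → Finset α)) fun _ _ ↦
    Iic_ssubset_Iic.mpr
  induction a using WellFoundedLT.induction with
  | ind a ih =>
    have hlt : ∑ b ∈ Iio a, f b = 0 := sum_eq_zero fun b hb ↦ ih b (mem_Iio.mp hb)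
    simpa only [← add_sum_Iio_eq_sum_Iic, hlt, add_zero] using h a

theorem sum_edgeFinset_sum_toFinset {V M : Type*} [Fintype V] [DecidableEq V] [AddCommMonoid M]
    (G : SimpleGraph V) [DecidableRel G.Adj] (f : V → M) :
    ∑ e ∈ G.edgeFinset, ∑ v ∈ e.toFinset, f v = ∑ v, G.degree v • f v := by
  rw [sum_comm' (t' := univ) (s' := fun v ↦ G.incidenceFinset v)]
  · simp only [sum_const, G.card_incidenceFinset_eq_degree]
  · simp [SimpleGraph.incidenceFinset_eq_filter]

theorem sum_natCast_degree_zmod_two {V : Type*} [Fintype V] (G : SimpleGraph V)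
    [DecidableRel G.Adj] : ∑ v, (G.degree v : ZMod 2) = 0 := by
  rw [← Nat.cast_sum, G.sum_degrees_eq_twice_card_edges, ZMod.natCast_eq_zero_iff_even]
  exact even_two_mul _

end Sums

section Chi

open Finset

variable {n : ℕ}

theorem chi_apply {e : Sym2 (Fin n)} (he : ¬e.IsDiag) (k : Fin (n - 1)) :
    chi n e k = ∑ v ∈ e.toFinset, if v.val ≤ k.val then 1 else 0 := by
  induction e with | _ i j =>
  rw [Sym2.toFinset_mk_eq, sum_pair (mt Sym2.mk_isDiag_iff.mpr he)]
  simp only [chi, Sym2.lift_mk]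
  split_ifs <;> first | omega | decide

variable (G : SimpleGraph (Fin n)) [DecidableRel G.Adj]

theorem sum_chi_apply (k : Fin (n - 1)) :
    (∑ e ∈ G.edgeFinset, chi n e) k =
      ∑ v ∈ Iic (k.castLE n.pred_le), (G.degree v : ZMod 2) := by
  calc
    (∑ e ∈ G.edgeFinset, chi n e) k =
        ∑ e ∈ G.edgeFinset, ∑ v ∈ e.toFinset, if v.val ≤ k.val then (1 : ZMod 2) else 0 := by
        rw [Finset.sum_apply]
        exact sum_congr rfl fun e he ↦ chi_apply (G.not_isDiag_of_mem_edgeFinset he) k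
    _ = ∑ v, G.degree v • if v.val ≤ k.val then 1 else 0 := sum_edgeFinset_sum_toFinset G _
    _ = ∑ v ∈ Iic (k.castLE n.pred_le), (G.degree v : ZMod 2) := by
        simp only [nsmul_eq_mul, mul_ite, mul_one, mul_zero, ← sum_filter]
        congr 1
        ext v
        simp [Fin.le_def]

theorem sum_chi_eq_zero_iff_forall_even_degree :
    ∑ e ∈ G.edgeFinset, chi n e = 0 ↔ ∀ v, Even (G.degree v) := by
  simp only [funext_iff, sum_chi_apply, Pi.zero_apply, ← ZMod.natCast_eq_zero_iff_even]
  rw [← forall_sum_Iic_eq_zero_iff fun v ↦ (G.degree v : ZMod 2)]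
  refine ⟨fun h a ↦ ?_, fun h k ↦ h _⟩
  by_cases ha : a.val < n - 1
  · exact h ⟨a, ha⟩
  · have huniv : Iic a = univ := by
      ext b
      simp only [mem_Iic, mem_univ, iff_true, Fin.le_def]
      omega
    rw [huniv, sum_natCast_degree_zmod_two]

end Chi

theorem stmt4 (n : ℕ) (hn : 2 ≤ n) (G : SimpleGraph (Fin n)) [DecidableRel G.Adj]
    (hcomp : ∀ u v : Fin n, (∃ x, G.Adj u x) → (∃ y, G.Adj v y) → G.Reachable u v) :
    (∃ (v : Fin n) (w : G.Walk v v), w.IsEulerian) ↔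
      ∑ e ∈ G.edgeFinset, chi n e = 0 := by
  have : Nonempty (Fin n) := ⟨⟨0, by omega⟩⟩
  rw [exists_isEulerian_iff_forall_even_degree hcomp, sum_chi_eq_zero_iff_forall_even_degree]
end

section
/- Let n ≥ 2 and let G be a simple graph on Fin n. Then G is connected if and only if the linear span over ZMod 2 of the coding sequence β(G) = {χ(e) : e ∈ E(G)} is all of (Fin (n-1) → ZMod 2). -/
/-!
Draw the vertices of `G` at the prefix vectors `p i = 1_{[0, i)}`. Modulo `2` the coding vector of
`{i, j}` is the edge vector `p i - p j`, and the `n` points `p i` are affinely independent because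
they span an affine space of dimension `n - 1`. For any affinely independent drawing, `p u - p v`
is a combination of edge vectors exactly when `u` and `v` are joined by a walk: a walk telescopes,
and conversely affine independence lifts the relation to the free module on the vertices, where
identifying the vertices of each component kills every edge vector.
-/

section EdgeDifferenceSpan

variable {R V M N : Type*} [Ring R] [AddCommGroup M] [Module R M] [AddCommGroup N] [Module R N]
  {G : SimpleGraph V} {u v : V}

variable (R) in
/-- The span of the edge vectors `p a - p b`, `a` adjacent to `b`, of `G` drawn with vertices at the
points `p`. When `p` is the standard basis of the free module on `V`, this is the space of
boundaries of `1`-chains of `G`. Both orientations of each edge are included. -/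
def edgeDifferenceSpan (G : SimpleGraph V) (p : V → M) : Submodule R M :=
  Submodule.span R {x | ∃ a b, G.Adj a b ∧ p a - p b = x}

lemma sub_mem_edgeDifferenceSpan_of_reachable (p : V → M) (h : G.Reachable u v) :
    p u - p v ∈ edgeDifferenceSpan R G p := by
  obtain ⟨walk⟩ := h
  induction walk with
  | nil => simp only [sub_self, zero_mem]
  | @cons a b c hab _ ih =>
    have hedge : p a - p b ∈ edgeDifferenceSpan R G p := Submodule.subset_span ⟨a, b, hab, rfl⟩
    simpa only [sub_add_sub_cancel] using add_mem hedge ih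

lemma map_edgeDifferenceSpan (p : V → M) (f : M →ₗ[R] N) :
    (edgeDifferenceSpan R G p).map f = edgeDifferenceSpan R G (f ∘ p) := by
  rw [edgeDifferenceSpan, edgeDifferenceSpan, Submodule.map_span]
  congr 1
  ext y
  simp

lemma edgeDifferenceSpan_le_ker {p : V → M} {f : M →ₗ[R] N}
    (hf : ∀ a b, G.Adj a b → f (p a) = f (p b)) :
    edgeDifferenceSpan R G p ≤ LinearMap.ker f := by
  refine Submodule.span_le.mpr ?_
  rintro _ ⟨a, b, hab, rfl⟩
  simp [hf a b hab]

lemma edgeDifferenceSpan_le_vectorSpan (G : SimpleGraph V) (p : V → M) :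
    edgeDifferenceSpan R G p ≤ vectorSpan R (Set.range p) := by
  refine Submodule.span_le.mpr ?_
  rintro _ ⟨a, b, -, rfl⟩
  exact vsub_mem_vectorSpan R (Set.mem_range_self a) (Set.mem_range_self b)

lemma reachable_of_single_sub_single_mem_edgeDifferenceSpan [Nontrivial R]
    (h : Finsupp.single u 1 - Finsupp.single v 1 ∈
      edgeDifferenceSpan R G fun w ↦ Finsupp.single w (1 : R)) :
    G.Reachable u v := by
  have hker := edgeDifferenceSpan_le_ker
    (f := Finsupp.lmapDomain R R G.connectedComponentMk) (fun a b hab ↦ by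
      simp [SimpleGraph.ConnectedComponent.sound hab.reachable]) h
  have hsingle : Finsupp.single (G.connectedComponentMk u) (1 : R) =
      Finsupp.single (G.connectedComponentMk v) 1 := by
    simpa [Finsupp.mapDomain_single] using
      sub_eq_zero.mp ((map_sub _ _ _).symm.trans (LinearMap.mem_ker.mp hker))
  exact SimpleGraph.ConnectedComponent.exact (Finsupp.single_left_injective one_ne_zero hsingle)

lemma eq_zero_of_affineIndependent_of_linearCombination_eq_zero {p : V → M}
    (hp : AffineIndependent R p) {w : V →₀ R}
    (hsum : Finsupp.linearCombination R (fun _ : V ↦ (1 : R)) w = 0)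
    (hcomb : Finsupp.linearCombination R p w = 0) : w = 0 := by
  have hsupport : ∀ a ∈ w.support, w a = 0 :=
    hp.eq_zero_of_sum_eq_zero
      (by simpa [Finsupp.linearCombination_apply, Finsupp.sum] using hsum) hcomb
  exact Finsupp.support_eq_empty.mp <| Finset.eq_empty_of_forall_notMem fun a ha ↦
    Finsupp.mem_support_iff.mp ha (hsupport a ha)

lemma reachable_of_sub_mem_edgeDifferenceSpan [Nontrivial R] {p : V → M}
    (hp : AffineIndependent R p) (h : p u - p v ∈ edgeDifferenceSpan R G p) :
    G.Reachable u v := by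
  set vertex : V → V →₀ R := fun w ↦ Finsupp.single w 1 with hvertex
  have hcomp : p = Finsupp.linearCombination R p ∘ vertex := by
    ext w
    simp [hvertex]
  have hmap : edgeDifferenceSpan R G p =
      (edgeDifferenceSpan R G vertex).map (Finsupp.linearCombination R p) := by
    rw [map_edgeDifferenceSpan, ← hcomp]
  obtain ⟨w, hw, hwp⟩ := Submodule.mem_map.mp (hmap ▸ h)
  have hsum : Finsupp.linearCombination R (fun _ : V ↦ (1 : R)) w = 0 :=
    edgeDifferenceSpan_le_ker (fun a b _ ↦ by simp [hvertex]) hw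
  have hdiff : w - (vertex u - vertex v) = 0 :=
    eq_zero_of_affineIndependent_of_linearCombination_eq_zero hp
      (by simp [hsum, hvertex]) (by simp [hwp, hvertex])
  exact reachable_of_single_sub_single_mem_edgeDifferenceSpan (sub_eq_zero.mp hdiff ▸ hw)

theorem preconnected_iff_edgeDifferenceSpan_eq_vectorSpan [Nontrivial R] {p : V → M}
    (hp : AffineIndependent R p) :
    G.Preconnected ↔ edgeDifferenceSpan R G p = vectorSpan R (Set.range p) := by
  constructor
  · intro hG
    refine (edgeDifferenceSpan_le_vectorSpan G p).antisymm (Submodule.span_le.mpr ?_)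
    rintro _ ⟨_, ⟨u, rfl⟩, _, ⟨v, rfl⟩, rfl⟩
    exact sub_mem_edgeDifferenceSpan_of_reachable p (hG u v)
  · intro hspan u v
    refine reachable_of_sub_mem_edgeDifferenceSpan hp ?_
    rw [hspan]
    exact vsub_mem_vectorSpan R (Set.mem_range_self u) (Set.mem_range_self v)

end EdgeDifferenceSpan

/-- The indicator vector of the first `i` of `N` coordinates. Coding vectors are differences of
these: `[i, j) = [0, j) \ [0, i)`. -/
def prefixIndicator (R : Type*) [Zero R] [One R] (N : ℕ) (i : Fin (N + 1)) : Fin N → R :=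
  fun k ↦ if k.castSucc < i then 1 else 0

lemma prefixIndicator_succ_sub_castSucc (R : Type*) [Ring R] {N : ℕ} (k : Fin N) :
    prefixIndicator R N k.succ - prefixIndicator R N k.castSucc = Pi.single k 1 := by
  ext l
  rcases lt_trichotomy l k with h | rfl | h
  · simp [prefixIndicator, h, h.le, h.ne]
  · simp [prefixIndicator]
  · simp [prefixIndicator, h.not_ge, h.not_gt, h.ne']

lemma vectorSpan_range_prefixIndicator (R : Type*) [Ring R] (N : ℕ) :
    vectorSpan R (Set.range (prefixIndicator R N)) = ⊤ := by
  rw [eq_top_iff, ← (Pi.basisFun R (Fin N)).span_eq, Submodule.span_le]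
  rintro _ ⟨k, rfl⟩
  rw [Pi.basisFun_apply, ← prefixIndicator_succ_sub_castSucc]
  exact vsub_mem_vectorSpan R (Set.mem_range_self _) (Set.mem_range_self _)

lemma affineIndependent_prefixIndicator (K : Type*) [DivisionRing K] (N : ℕ) :
    AffineIndependent K (prefixIndicator K N) := by
  rw [affineIndependent_iff_finrank_vectorSpan_eq K _ (Fintype.card_fin (N + 1)),
    vectorSpan_range_prefixIndicator, finrank_top, Module.finrank_fin_fun]

lemma chi_mk_eq_prefixIndicator_sub {N : ℕ} (i j : Fin (N + 1)) :
    chi (N + 1) s(i, j) = prefixIndicator (ZMod 2) N i - prefixIndicator (ZMod 2) N j := by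
  funext k
  change (if min i.val j.val ≤ k.val ∧ k.val < max i.val j.val then (1 : ZMod 2) else 0) =
    (if k.val < i.val then 1 else 0) - (if k.val < j.val then 1 else 0)
  rw [CharTwo.sub_eq_add]
  grind

lemma span_chi_image_edgeSet {N : ℕ} (G : SimpleGraph (Fin (N + 1))) :
    Submodule.span (ZMod 2) (chi (N + 1) '' G.edgeSet) =
      edgeDifferenceSpan (ZMod 2) G (prefixIndicator (ZMod 2) N) := by
  refine congrArg (Submodule.span (ZMod 2)) (Set.ext fun x ↦ ?_)
  simp [Sym2.exists, chi_mk_eq_prefixIndicator_sub]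

theorem stmt7 (n : ℕ) (hn : 2 ≤ n) (G : SimpleGraph (Fin n)) :
    G.Connected ↔
      Submodule.span (ZMod 2) (chi n '' G.edgeSet) = ⊤ := by
  obtain ⟨N, rfl⟩ : ∃ N, n = N + 1 := Nat.exists_eq_add_one.mpr (by lia)
  calc G.Connected
      ↔ G.Preconnected := G.connected_iff.trans (and_iff_left inferInstance)
    _ ↔ edgeDifferenceSpan (ZMod 2) G (prefixIndicator (ZMod 2) N) =
          vectorSpan (ZMod 2) (Set.range (prefixIndicator (ZMod 2) N)) :=
        preconnected_iff_edgeDifferenceSpan_eq_vectorSpan (affineIndependent_prefixIndicator _ N)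
    _ ↔ Submodule.span (ZMod 2) (chi (N + 1) '' G.edgeSet) = ⊤ := by
        rw [span_chi_image_edgeSet, vectorSpan_range_prefixIndicator]
end

section
/- Let A and A₁ be n × m matrices over ZMod 2 each of whose columns are nonzero and pairwise distinct. Then there exists a bijection σ of the column index set Fin m such that for every subset X of Fin m, the columns of A indexed by X are linearly independent over ZMod 2 if and only if the columns of A₁ indexed by σ(X) are linearly independent over ZMod 2, if and only if there exist an invertible n × n matrix P over ZMod 2 and an m × m permutation matrix Q over ZMod 2 such that P * A * Q = A₁. -/
/-!
Over `ZMod 2` a linear combination is the sum of a subfamily, so a family is independent exactly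
when no nonempty subfamily sums to zero. Let `v` and `w` be families with the same independent index
sets. If `v` sums to zero on `S ≠ ∅`, then `S` is dependent for `w`, so `w` sums to zero on some
nonempty `T ⊆ S`; when `T ≠ S`, induction applied to `T` and `S \ T` shows that `w` sums to zero
on `S` as well. Hence `v` and `w` satisfy the same linear relations, so `v i ↦ w i` extends to an
isomorphism of their spans, and then to an automorphism of the whole space.
-/

section ZModTwo

variable {ι V W : Type*} [AddCommGroup V] [Module (ZMod 2) V] [AddCommGroup W] [Module (ZMod 2) W]
  {v : ι → V} {w : ι → W}

theorem linearCombination_zmod_two_eq_sum_support (v : ι → V) (c : ι →₀ ZMod 2) :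
    Finsupp.linearCombination (ZMod 2) v c = ∑ i ∈ c.support, v i := by
  have coeff_eq_one : ∀ x : ZMod 2, x ≠ 0 → x = 1 := by decide
  rw [Finsupp.linearCombination_apply]
  refine Finset.sum_congr rfl fun i hi => ?_
  simp only [coeff_eq_one (c i) (Finsupp.mem_support_iff.mp hi), one_smul]

theorem linearIndepOn_zmod_two_iff {s : Set ι} :
    LinearIndepOn (ZMod 2) v s ↔ ∀ T : Finset ι, ↑T ⊆ s → ∑ i ∈ T, v i = 0 → T = ∅ := by
  simp only [linearIndepOn_iff, Finsupp.mem_supported, linearCombination_zmod_two_eq_sum_support,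
    ← Finsupp.support_eq_empty]
  refine ⟨fun h T => ?_, fun h c => h c.support⟩
  obtain ⟨c, rfl⟩ : ∃ c : ι →₀ ZMod 2, c.support = T :=
    ⟨Finsupp.indicator T fun _ _ => 1, by classical ext; simp [Finsupp.indicator_apply]⟩
  exact h c

theorem sum_eq_zero_of_linearIndepOn_imp {S : Finset ι}
    (hindep : LinearIndepOn (ZMod 2) w S → LinearIndepOn (ZMod 2) v S)
    (ih : ∀ T ⊂ S, ∑ i ∈ T, v i = 0 ↔ ∑ i ∈ T, w i = 0) (hv : ∑ i ∈ S, v i = 0) :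
    ∑ i ∈ S, w i = 0 := by
  classical
  obtain rfl | hS := S.eq_empty_or_nonempty
  · exact Finset.sum_empty
  have hdep : ¬ LinearIndepOn (ZMod 2) w S := fun hw =>
    hS.ne_empty (linearIndepOn_zmod_two_iff.mp (hindep hw) S subset_rfl hv)
  rw [linearIndepOn_zmod_two_iff] at hdep
  push Not at hdep
  obtain ⟨T, hTS, hwT, hT⟩ := hdep
  obtain rfl | hTS := (Finset.coe_subset.mp hTS).eq_or_ssubset
  · exact hwT
  have hvT : ∑ i ∈ T, v i = 0 := (ih T hTS).mpr hwT
  have hvST : ∑ i ∈ S \ T, v i = 0 := by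
    rwa [← Finset.sum_sdiff hTS.subset, hvT, add_zero] at hv
  have hwST : ∑ i ∈ S \ T, w i = 0 := (ih _ (Finset.sdiff_ssubset hTS.subset hT)).mp hvST
  rw [← Finset.sum_sdiff hTS.subset, hwST, hwT, add_zero]

theorem sum_eq_zero_iff_of_linearIndepOn_iff
    (h : ∀ S : Finset ι, LinearIndepOn (ZMod 2) v S ↔ LinearIndepOn (ZMod 2) w S)
    (S : Finset ι) : ∑ i ∈ S, v i = 0 ↔ ∑ i ∈ S, w i = 0 := by
  induction S using Finset.strongInduction with
  | H S ih =>
    exact ⟨sum_eq_zero_of_linearIndepOn_imp (h S).mpr ih,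
      sum_eq_zero_of_linearIndepOn_imp (h S).mp fun T hT => (ih T hT).symm⟩

theorem ker_linearCombination_eq_of_linearIndepOn_iff
    (h : ∀ S : Finset ι, LinearIndepOn (ZMod 2) v S ↔ LinearIndepOn (ZMod 2) w S) :
    LinearMap.ker (Finsupp.linearCombination (ZMod 2) v) =
      LinearMap.ker (Finsupp.linearCombination (ZMod 2) w) := by
  ext c
  simpa only [LinearMap.mem_ker, linearCombination_zmod_two_eq_sum_support] using
    sum_eq_zero_iff_of_linearIndepOn_iff h c.support

end ZModTwo

theorem exists_linearEquiv_apply_eq_of_ker_eq {K U V : Type*} [DivisionRing K]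
    [AddCommGroup U] [Module K U] [AddCommGroup V] [Module K V] {f g : U →ₗ[K] V}
    [FiniteDimensional K (LinearMap.range f)] (h : LinearMap.ker f = LinearMap.ker g) :
    ∃ e : V ≃ₗ[K] V, ∀ u, e (f u) = g u := by
  let rangeEquiv : LinearMap.range f ≃ₗ[K] LinearMap.range g :=
    f.quotKerEquivRange.symm ≪≫ₗ Submodule.quotEquivOfEq _ _ h ≪≫ₗ g.quotKerEquivRange
  obtain ⟨e, he⟩ := Submodule.exists_linearEquiv_restrict_eq rangeEquiv
  refine ⟨e, fun u => ?_⟩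
  rw [← he ⟨f u, LinearMap.mem_range_self f u⟩]
  simp [rangeEquiv, LinearMap.quotKerEquivRange_symm_apply_image]

theorem forall_linearIndepOn_iff_iff_exists_linearEquiv {ι V : Type*} [AddCommGroup V]
    [Module (ZMod 2) V] {v w : ι → V}
    [FiniteDimensional (ZMod 2) (Submodule.span (ZMod 2) (Set.range v))] :
    (∀ s : Set ι, LinearIndepOn (ZMod 2) v s ↔ LinearIndepOn (ZMod 2) w s) ↔
      ∃ e : V ≃ₗ[ZMod 2] V, ∀ i, e (v i) = w i := by
  constructor
  · intro h
    have : FiniteDimensional (ZMod 2) (LinearMap.range (Finsupp.linearCombination (ZMod 2) v)) := by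
      rwa [Finsupp.range_linearCombination]
    obtain ⟨e, he⟩ := exists_linearEquiv_apply_eq_of_ker_eq
      (ker_linearCombination_eq_of_linearIndepOn_iff fun S : Finset ι => h S)
    exact ⟨e, fun i => by simpa using he (Finsupp.single i 1)⟩
  · rintro ⟨e, he⟩ s
    obtain rfl : e ∘ v = w := funext he
    exact (e.toLinearMap.linearIndepOn_iff_of_injOn e.injective.injOn).symm

section Matrices

open scoped Matrix

variable {ι κ R : Type*}

theorem mul_permMatrix_eq_iff [Fintype ι] [DecidableEq ι] [NonAssocSemiring R]
    {M N : Matrix κ ι R} {σ : Equiv.Perm ι} :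
    M * σ.permMatrix R = N ↔ ∀ j, M.col j = N.col (σ j) := by
  rw [PEquiv.mul_toMatrix_toPEquiv]
  constructor
  · rintro rfl j
    ext i
    simp
  · intro h
    ext i j
    simpa using congrFun (h (σ.symm j)) i

theorem of_ite_eq_permMatrix [DecidableEq ι] [Zero R] [One R] (σ : Equiv.Perm ι) :
    (Matrix.of fun i j => if σ i = j then (1 : R) else 0) = σ.permMatrix R := by
  ext i j
  simp [PEquiv.toMatrix_apply, eq_comm]

variable [Fintype κ] [DecidableEq κ]

theorem exists_linearEquiv_pi_iff_exists_isUnit_mulVec [CommRing R] {v w : ι → κ → R} :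
    (∃ e : (κ → R) ≃ₗ[R] (κ → R), ∀ i, e (v i) = w i) ↔
      ∃ P : Matrix κ κ R, IsUnit P ∧ ∀ i, P *ᵥ v i = w i := by
  constructor
  · rintro ⟨e, he⟩
    refine ⟨LinearMap.toMatrix' e.toLinearMap, ?_, fun i => ?_⟩
    · exact LinearMap.isUnit_toMatrix'_iff.mpr ((Module.End.isUnit_iff _).mpr e.bijective)
    · exact (LinearMap.toMatrix'_mulVec _ _).trans (he i)
  · rintro ⟨P, hP, hPv⟩
    exact ⟨P.toLinearEquiv' hP.invertible, hPv⟩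

theorem stmt10_general [Fintype ι] [DecidableEq ι] (A A₁ : Matrix κ ι (ZMod 2)) :
    (∃ σ : Equiv.Perm ι, ∀ X : Set ι,
        (LinearIndepOn (ZMod 2) A.col X ↔ LinearIndepOn (ZMod 2) A₁.col (σ '' X))) ↔
      ∃ (P : Matrix κ κ (ZMod 2)) (τ : Equiv.Perm ι),
        IsUnit P ∧ P * A * τ.permMatrix (ZMod 2) = A₁ := by
  calc
    _ ↔ ∃ σ : Equiv.Perm ι, ∃ e : (κ → ZMod 2) ≃ₗ[ZMod 2] (κ → ZMod 2),
          ∀ j, e (A.col j) = A₁.col (σ j) := by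
      simp only [← linearIndepOn_equiv, forall_linearIndepOn_iff_iff_exists_linearEquiv,
        Function.comp_apply]
    _ ↔ ∃ σ : Equiv.Perm ι, ∃ P : Matrix κ κ (ZMod 2),
          IsUnit P ∧ ∀ j, P *ᵥ A.col j = A₁.col (σ j) :=
      exists_congr fun σ => exists_linearEquiv_pi_iff_exists_isUnit_mulVec
    _ ↔ ∃ (P : Matrix κ κ (ZMod 2)) (τ : Equiv.Perm ι),
          IsUnit P ∧ ∀ j, (P * A).col j = A₁.col (τ j) := exists_comm
    _ ↔ _ := by simp only [mul_permMatrix_eq_iff]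

end Matrices

theorem stmt10 (n m : ℕ) (A A₁ : Matrix (Fin n) (Fin m) (ZMod 2))
    (hA0 : ∀ j, A.transpose j ≠ 0) (hA₁0 : ∀ j, A₁.transpose j ≠ 0)
    (hAinj : Function.Injective A.transpose) (hA₁inj : Function.Injective A₁.transpose) :
    (∃ σ : Equiv.Perm (Fin m), ∀ X : Set (Fin m),
        (LinearIndependent (ZMod 2) (fun x : X => A.transpose x.val) ↔
          LinearIndependent (ZMod 2) (fun y : (⇑σ '' X) => A₁.transpose y.val))) ↔
      (∃ (P : Matrix (Fin n) (Fin n) (ZMod 2)) (τ : Equiv.Perm (Fin m)),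
        IsUnit P ∧
          P * A * (Matrix.of fun i j : Fin m => if τ i = j then (1 : ZMod 2) else 0) = A₁) := by
  simp only [of_ite_eq_permMatrix]
  exact stmt10_general A A₁
end

section
/- Let n ≥ 2, let G be a simple graph on Fin n, and let X be any subset of the edge set of G. Then the spanning subgraph of G with edge set X is acyclic (contains no cycle) if and only if the family of vectors (χ(e))_{e ∈ X} is linearly independent over ZMod 2 in (Fin (n-1) → ZMod 2). (Hence the cycle matroid of G is isomorphic to the column matroid of its coding sequence.) -/
/-!
For coding vectors, `χ {i, j} = p i - p j`, where `p i` is the indicator of the initial segment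
`{k | k < i}`; all that matters about `p` is that it is affinely independent. Then the span of the
vectors of the edges of a graph contains `χ {u, v}` exactly when `u` and `v` are connected: a walk
gives a telescoping sum, and conversely the indicator function of a connected component extends to
an affine function, whose linear part kills every edge of the graph. So an edge is a bridge iff its
vector is not in the span of the others. Finally, a graph is acyclic iff all its edges are bridges,
and a family is independent iff none of its members is in the span of the others.
-/

section AffineExtension

open Submodule

variable {K ι M P N Q : Type*} [DivisionRing K] [AddCommGroup M] [Module K M] [AddTorsor M P]
  [AddCommGroup N] [Module K N] [AddTorsor N Q]

theorem exists_linearMap_apply_eq_of_linearIndependent {v : ι → M} (hv : LinearIndependent K v)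
    (c : ι → N) : ∃ φ : M →ₗ[K] N, ∀ i, φ (v i) = c i := by
  obtain ⟨φ, hφ⟩ := LinearMap.exists_extend (Finsupp.linearCombination K c ∘ₗ hv.repr)
  refine ⟨φ, fun i => ?_⟩
  have hi : v i ∈ span K (Set.range v) := subset_span (Set.mem_range_self i)
  calc
    φ (v i) = Finsupp.linearCombination K c (hv.repr ⟨v i, hi⟩) :=
      LinearMap.congr_fun hφ ⟨v i, hi⟩
    _ = c i := by simp [hv.repr_eq_single i ⟨v i, hi⟩ rfl]

theorem exists_affineMap_apply_eq_of_affineIndependent {p : ι → P} (hp : AffineIndependent K p)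
    (c : ι → Q) : ∃ f : P →ᵃ[K] Q, ∀ i, f (p i) = c i := by
  rcases isEmpty_or_nonempty ι with _ | ⟨⟨i₀⟩⟩
  · exact ⟨Classical.arbitrary _, isEmptyElim⟩
  obtain ⟨φ, hφ⟩ := exists_linearMap_apply_eq_of_linearIndependent
    ((affineIndependent_iff_linearIndependent_vsub K p i₀).1 hp) fun i => c i -ᵥ c i₀
  refine ⟨AffineMap.mk' (fun x => φ (x -ᵥ p i₀) +ᵥ c i₀) φ (p i₀) (by simp), fun i => ?_⟩
  by_cases hi : i = i₀
  · simp [hi]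
  · simp [hφ ⟨i, hi⟩]

end AffineExtension

/-- `χ` encodes each pair `{a, b}` as the difference of the points `p a` and `p b`, with a sign that
may vary from pair to pair. When `p` is a standard basis, the values of `χ` on the edges of a graph
are the columns of an oriented incidence matrix. Unordered pairs carry no orientation; leaving the
sign free makes the notion meaningful in every characteristic. -/
def IsDifferenceCoding {V M P : Type*} [AddCommGroup M] [AddTorsor M P] (p : V → P)
    (χ : Sym2 V → M) : Prop :=
  ∀ a b, χ s(a, b) = p a -ᵥ p b ∨ χ s(a, b) = p b -ᵥ p a

section DifferenceCoding

open SimpleGraph Submodule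

variable {V M P : Type*} [AddCommGroup M] [AddTorsor M P] {p : V → P} {χ : Sym2 V → M}
  {G : SimpleGraph V} {u v : V}

theorem IsDifferenceCoding.mem_iff_vsub_mem (hχ : IsDifferenceCoding p χ) (W : AddSubgroup M)
    (a b : V) : χ s(a, b) ∈ W ↔ p a -ᵥ p b ∈ W := by
  rcases hχ a b with h | h
  · rw [h]
  · rw [h, ← neg_vsub_eq_vsub_rev, neg_mem_iff]

theorem vsub_mem_of_reachable {W : AddSubgroup M} (hW : ∀ a b, G.Adj a b → p a -ᵥ p b ∈ W)
    (huv : G.Reachable u v) : p u -ᵥ p v ∈ W := by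
  obtain ⟨w⟩ := huv
  induction w with
  | nil => simp
  | cons hab _ ih => simpa only [vsub_add_vsub_cancel] using add_mem (hW _ _ hab) ih

variable {K : Type*} [DivisionRing K] [Module K M]

theorem exists_linearMap_separating_of_not_reachable (hp : AffineIndependent K p)
    (huv : ¬ G.Reachable u v) :
    ∃ φ : M →ₗ[K] K, (∀ a b, G.Adj a b → φ (p a -ᵥ p b) = 0) ∧ φ (p u -ᵥ p v) ≠ 0 := by
  classical
  obtain ⟨f, hf⟩ := exists_affineMap_apply_eq_of_affineIndependent hp
    fun x => if G.Reachable u x then (1 : K) else 0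
  refine ⟨f.linear, fun a b hab => ?_, ?_⟩
  · have hiff : G.Reachable u a ↔ G.Reachable u b :=
      ⟨(·.trans hab.reachable), (·.trans hab.symm.reachable)⟩
    simp [f.linearMap_vsub, hf, hiff]
  · simp [f.linearMap_vsub, hf, huv]

theorem IsDifferenceCoding.mem_span_image_edgeSet_iff_reachable (hχ : IsDifferenceCoding p χ)
    (hp : AffineIndependent K p) : χ s(u, v) ∈ span K (χ '' G.edgeSet) ↔ G.Reachable u v := by
  constructor
  · contrapose
    intro huv hmem
    obtain ⟨φ, hφ, hφuv⟩ := exists_linearMap_separating_of_not_reachable hp huv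
    have hker (a b : V) : χ s(a, b) ∈ LinearMap.ker φ ↔ φ (p a -ᵥ p b) = 0 :=
      hχ.mem_iff_vsub_mem (LinearMap.ker φ).toAddSubgroup a b
    have hle : span K (χ '' G.edgeSet) ≤ LinearMap.ker φ := by
      rw [span_le, Set.image_subset_iff]
      rintro ⟨a, b⟩ hab
      exact (hker a b).2 (hφ a b hab)
    exact hφuv ((hker u v).1 (hle hmem))
  · intro huv
    let W := (span K (χ '' G.edgeSet)).toAddSubgroup
    exact (hχ.mem_iff_vsub_mem W u v).2 <| vsub_mem_of_reachable
      (fun a b hab => (hχ.mem_iff_vsub_mem W a b).1 (subset_span ⟨s(a, b), hab, rfl⟩)) huv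

theorem IsDifferenceCoding.isBridge_iff_notMem_span (hχ : IsDifferenceCoding p χ)
    (hp : AffineIndependent K p) (e : Sym2 V) :
    G.IsBridge e ↔ χ e ∉ span K (χ '' (G.edgeSet \ {e})) := by
  induction e with
  | h a b => rw [isBridge_iff, ← edgeSet_deleteEdges, hχ.mem_span_image_edgeSet_iff_reachable hp]

theorem stmt11_general (hχ : IsDifferenceCoding p χ) (hp : AffineIndependent K p)
    {X : Set (Sym2 V)} (hX : X ⊆ Sym2.diagSetᶜ) :
    (fromEdgeSet X).IsAcyclic ↔ LinearIndepOn K χ X := by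
  have hE : (fromEdgeSet X).edgeSet = X :=
    (edgeSet_eq_iff _ X).2 ⟨rfl, Set.subset_compl_iff_disjoint_right.1 hX⟩
  simp only [isAcyclic_iff_forall_isBridge, linearIndepOn_iff_notMem_span,
    hχ.isBridge_iff_notMem_span hp, hE]

end DifferenceCoding

section InitialSegments

/-- The potential of the vertex `i` in the coding vectors: the indicator function of the initial
segment `{k | k < i}` of `Fin (n - 1)`. -/
def initialSegmentIndicator (R : Type*) [Zero R] [One R] (n : ℕ) (i : Fin n) : Fin (n - 1) → R :=
  fun k => if k.val < i.val then 1 else 0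

theorem isDifferenceCoding_chi (n : ℕ) :
    IsDifferenceCoding (initialSegmentIndicator (ZMod 2) n) (chi n) := by
  intro i j
  left
  funext k
  simp only [chi, initialSegmentIndicator, Sym2.lift_mk, vsub_eq_sub, Pi.sub_apply]
  split_ifs <;> first | omega | rfl

theorem affineIndependent_initialSegmentIndicator (R : Type*) [Ring R] (n : ℕ) :
    AffineIndependent R (initialSegmentIndicator R n) := by
  rw [affineIndependent_iff_of_fintype]
  intro w hw hsum i
  rw [Finset.univ.weightedVSub_eq_linear_combination hw] at hsum
  -- The coordinates of `∑ j, w j • p j` are the tail sums of `w`; the first tail is `hw`.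
  have hIoi (i : Fin n) : ∑ j ∈ Finset.Ioi i, w j = 0 := by
    by_cases hi : i.val < n - 1
    · have hcoord := congrFun hsum ⟨i, hi⟩
      simpa [initialSegmentIndicator, ← Finset.sum_filter, Finset.filter_lt_eq_Ioi] using hcoord
    · rw [Finset.sum_eq_zero]
      intro j hj
      have := Finset.mem_Ioi.1 hj
      omega
  have hIci : ∑ j ∈ Finset.Ici i, w j = 0 := by
    by_cases hi : i.val = 0
    · have hIci_eq : Finset.Ici i = Finset.univ := by ext j; simp [Fin.le_def, hi]
      rw [hIci_eq, hw]
    · have hIci_eq : Finset.Ici i = Finset.Ioi ⟨i.val - 1, by omega⟩ := by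
        ext j
        simp only [Finset.mem_Ici, Finset.mem_Ioi, Fin.le_def, Fin.lt_def]
        omega
      rw [hIci_eq, hIoi]
  rw [← Finset.add_sum_Ioi_eq_sum_Ici, hIoi, add_zero] at hIci
  exact hIci

end InitialSegments

theorem stmt11 (n : ℕ) (hn : 2 ≤ n) (G : SimpleGraph (Fin n))
    (X : Set (Sym2 (Fin n))) (hX : X ⊆ G.edgeSet) :
    (SimpleGraph.fromEdgeSet X).IsAcyclic ↔
      LinearIndependent (ZMod 2) (fun e : X => chi n e.val) :=
  stmt11_general (isDifferenceCoding_chi n) (affineIndependent_initialSegmentIndicator (ZMod 2) n)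
    (hX.trans G.edgeSet_subset_compl_diagSet)
end

section
/- Let n ≥ 2 and let A be an (n-1) × m matrix over ZMod 2 whose columns are nonzero and pairwise distinct. Then the following are equivalent: (1) there exist a simple graph G on Fin n and a bijection ψ from the column index set Fin m onto the edge set of G such that for every subset X of Fin m, the columns of A indexed by X are linearly independent over ZMod 2 if and only if the spanning subgraph of G with edge set ψ(X) is acyclic; (2) m ≤ n(n-1)/2 and there exists an invertible (n-1) × (n-1) matrix P over ZMod 2 such that every column of P * A lies in C(n-1). -/
section BinaryRepresentations

variable {ι V W : Type*} [AddCommGroup V] [Module (ZMod 2) V] [AddCommGroup W] [Module (ZMod 2) W]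

lemma linearCombination_zmodTwo_apply (v : ι → V) (f : ι →₀ ZMod 2) :
    Finsupp.linearCombination (ZMod 2) v f = ∑ i ∈ f.support, v i := by
  rw [Finsupp.linearCombination_apply]
  refine Finset.sum_congr rfl fun i hi => ?_
  have hfi : f i = 1 := Fin.eq_one_of_ne_zero _ (Finsupp.mem_support_iff.1 hi)
  simp only [hfi, one_smul]

lemma linearIndepOn_zmodTwo_iff {v : ι → V} {X : Set ι} :
    LinearIndepOn (ZMod 2) v X ↔
      ∀ T : Finset ι, (T : Set ι) ⊆ X → ∑ i ∈ T, v i = 0 → T = ∅ := by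
  classical
  simp only [linearIndepOn_iff, Finsupp.mem_supported, linearCombination_zmodTwo_apply]
  refine ⟨fun h T hTX hT => ?_, fun h f hfX hf => Finsupp.support_eq_empty.1 (h _ hfX hf)⟩
  have support_indicator : (Finsupp.indicator T fun _ _ => (1 : ZMod 2)).support = T := by
    ext i
    simp [Finsupp.indicator_apply]
  rw [← support_indicator, Finsupp.support_eq_empty]
  exact h _ (by rwa [support_indicator]) (by rwa [support_indicator])

lemma sum_eq_zero_of_linearIndepOn_iff {a : ι → V} {b : ι → W}
    (h : ∀ X : Set ι, LinearIndepOn (ZMod 2) a X ↔ LinearIndepOn (ZMod 2) b X)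
    (S : Finset ι) (hS : ∑ i ∈ S, a i = 0) : ∑ i ∈ S, b i = 0 := by
  classical
  -- A nonempty `T ⊆ S` with `∑ i ∈ T, b i = 0` is either `S` itself, or it is dependent for `a` too
  -- and `S` splits into two smaller dependencies of `a`.
  induction S using Finset.strongInduction with
  | H S ih =>
    rcases S.eq_empty_or_nonempty with rfl | hS_ne
    · exact Finset.sum_empty
    have hSb : ¬ LinearIndepOn (ZMod 2) b S := fun hb =>
      hS_ne.ne_empty (linearIndepOn_zmodTwo_iff.1 ((h S).2 hb) S subset_rfl hS)
    obtain ⟨T, hTS, hT, hT_ne⟩ : ∃ T ⊆ S, ∑ i ∈ T, b i = 0 ∧ T.Nonempty := by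
      simpa [linearIndepOn_zmodTwo_iff, Finset.nonempty_iff_ne_empty] using hSb
    rcases hTS.eq_or_ssubset with rfl | hTS
    · exact hT
    have hTa : ¬ LinearIndepOn (ZMod 2) a T := fun ha =>
      hT_ne.ne_empty (linearIndepOn_zmodTwo_iff.1 ((h T).1 ha) T subset_rfl hT)
    obtain ⟨U, hUT, hU, hU_ne⟩ : ∃ U ⊆ T, ∑ i ∈ U, a i = 0 ∧ U.Nonempty := by
      simpa [linearIndepOn_zmodTwo_iff, Finset.nonempty_iff_ne_empty] using hTa
    have hUS : U ⊂ S := hUT.trans_ssubset hTS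
    have hSU : ∑ i ∈ S \ U, a i = 0 := by
      rwa [← Finset.sum_sdiff hUS.subset, hU, add_zero] at hS
    rw [← Finset.sum_sdiff hUS.subset, ih U hUS hU,
      ih (S \ U) (Finset.sdiff_ssubset hUS.subset hU_ne) hSU, add_zero]

lemma ker_linearCombination_le_of_linearIndepOn_iff {a : ι → V} {b : ι → W}
    (h : ∀ X : Set ι, LinearIndepOn (ZMod 2) a X ↔ LinearIndepOn (ZMod 2) b X) :
    LinearMap.ker (Finsupp.linearCombination (ZMod 2) a) ≤
      LinearMap.ker (Finsupp.linearCombination (ZMod 2) b) := by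
  intro f hf
  rw [LinearMap.mem_ker, linearCombination_zmodTwo_apply] at hf ⊢
  exact sum_eq_zero_of_linearIndepOn_iff h _ hf

lemma exists_linearEquiv_comp_eq_of_ker_eq {K M N : Type*} [DivisionRing K] [AddCommGroup M]
    [Module K M] [AddCommGroup N] [Module K N] [FiniteDimensional K N] {f f' : M →ₗ[K] N}
    (h : LinearMap.ker f = LinearMap.ker f') : ∃ g : N ≃ₗ[K] N, ∀ x, g (f x) = f' x := by
  obtain ⟨g, hg⟩ := Submodule.exists_linearEquiv_restrict_eq
    (f.quotKerEquivRange.symm ≪≫ₗ Submodule.quotEquivOfEq _ _ h ≪≫ₗ f'.quotKerEquivRange)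
  refine ⟨g, fun x => ?_⟩
  have hgx := hg ⟨f x, LinearMap.mem_range_self f x⟩
  simpa [LinearMap.quotKerEquivRange_symm_apply_image] using hgx.symm

theorem forall_linearIndepOn_iff_iff_exists_linearEquiv_s13 [FiniteDimensional (ZMod 2) V]
    {a b : ι → V} :
    (∀ X : Set ι, LinearIndepOn (ZMod 2) a X ↔ LinearIndepOn (ZMod 2) b X) ↔
      ∃ g : V ≃ₗ[ZMod 2] V, ∀ i, g (a i) = b i := by
  constructor
  · intro h
    obtain ⟨g, hg⟩ := exists_linearEquiv_comp_eq_of_ker_eq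
      ((ker_linearCombination_le_of_linearIndepOn_iff h).antisymm
        (ker_linearCombination_le_of_linearIndepOn_iff fun X => (h X).symm))
    exact ⟨g, fun i => by simpa using hg (Finsupp.single i 1)⟩
  · rintro ⟨g, hg⟩ X
    obtain rfl : g ∘ a = b := funext hg
    exact (g.toLinearMap.linearIndepOn_iff_of_injOn g.injective.injOn).symm

end BinaryRepresentations

lemma exists_linearEquiv_iff_exists_isUnit_mulVec {R ι m : Type*} [CommRing R] [Fintype m]
    [DecidableEq m] {a b : ι → m → R} :
    (∃ g : (m → R) ≃ₗ[R] (m → R), ∀ i, g (a i) = b i) ↔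
      ∃ P : Matrix m m R, IsUnit P ∧ ∀ i, P.mulVec (a i) = b i := by
  constructor
  · rintro ⟨g, hg⟩
    refine ⟨LinearMap.toMatrix' g.toLinearMap, ?_, fun i => ?_⟩
    · exact LinearMap.isUnit_toMatrix'_iff.2 ((Module.End.isUnit_iff _).2 g.bijective)
    · rw [LinearMap.toMatrix'_mulVec]
      exact hg i
  · rintro ⟨P, hP, hPa⟩
    exact ⟨P.toLinearEquiv' hP.invertible, hPa⟩

section GraphicRepresentations

lemma exists_linearMap_vsub_eq {K ι V P W : Type*} [DivisionRing K] [AddCommGroup V] [Module K V]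
    [AddTorsor V P] [AddCommGroup W] [Module K W] {p : ι → P} (hp : AffineIndependent K p)
    (g : ι → W) : ∃ φ : V →ₗ[K] W, ∀ i j, φ (p i -ᵥ p j) = g i - g j := by
  classical
  rcases isEmpty_or_nonempty ι with _ | ⟨⟨i₀⟩⟩
  · exact ⟨0, isEmptyElim⟩
  rw [affineIndependent_iff_linearIndependent_vsub K p i₀] at hp
  obtain ⟨s, hs⟩ := LinearMap.exists_leftInverse_of_injective _ (LinearMap.ker_eq_bot.2 hp)
  let φ := Finsupp.linearCombination K (fun i : {i // i ≠ i₀} => g i - g i₀) ∘ₗ s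
  have hφ (i : ι) : φ (p i -ᵥ p i₀) = g i - g i₀ := by
    by_cases hi : i = i₀
    · simp [hi]
    · have hsi : s (p i -ᵥ p i₀) = Finsupp.single ⟨i, hi⟩ 1 := by
        simpa using LinearMap.congr_fun hs (Finsupp.single ⟨i, hi⟩ 1)
      simp [φ, hsi]
  refine ⟨φ, fun i j => ?_⟩
  rw [← vsub_sub_vsub_cancel_right (p i) (p j) (p i₀), map_sub, hφ, hφ, sub_sub_sub_cancel_right]

variable {V W : Type*} [AddCommGroup W] [Module (ZMod 2) W] {p : V → W}

variable (p) in
lemma sum_map_edges_eq_add {G : SimpleGraph V} {u v : V} (w : G.Walk u v) :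
    (w.edges.map fun e => (e.map p).add).sum = p u + p v := by
  induction w with
  | nil => exact (ZModModule.add_self _).symm
  | cons h w ih => simp [ih, ZModModule.add_add_add_cancel]

lemma exists_dual_of_isBridge (hp : AffineIndependent (ZMod 2) p) {G : SimpleGraph V}
    {e : Sym2 V} (he : G.IsBridge e) :
    ∃ φ : Module.Dual (ZMod 2) W, φ (e.map p).add = 1 ∧
      ∀ f ∈ G.edgeSet, f ≠ e → φ (f.map p).add = 0 := by
  classical
  induction e with
  | h u v =>
    -- Prescribing `1` on the vertices on the side of `u` and `0` elsewhere makes `φ` vanish on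
    -- every edge that does not cross the cut.
    let H := G.deleteEdges {s(u, v)}
    obtain ⟨φ, hφ⟩ := exists_linearMap_vsub_eq hp
      fun w => if H.Reachable u w then (1 : ZMod 2) else 0
    simp only [vsub_eq_sub, ZModModule.sub_eq_add] at hφ
    refine ⟨φ, ?_, fun f hf hfe => ?_⟩
    · have huv : ¬ H.Reachable u v := SimpleGraph.isBridge_iff.1 he
      simp [hφ, huv]
    · induction f with
      | h x y =>
        have hxy : H.Adj x y := SimpleGraph.deleteEdges_adj.2 ⟨hf, hfe⟩
        have hreach : H.Reachable u x ↔ H.Reachable u y :=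
          ⟨fun h => h.trans hxy.reachable, fun h => h.trans hxy.symm.reachable⟩
        simp [hφ, hreach, ZModModule.add_self]

lemma linearIndepOn_edgeSet_of_isAcyclic (hp : AffineIndependent (ZMod 2) p)
    {G : SimpleGraph V} (hG : G.IsAcyclic) :
    LinearIndepOn (ZMod 2) (fun e => (e.map p).add) G.edgeSet := by
  choose φ hφ_self hφ_other using fun e : G.edgeSet =>
    exists_dual_of_isBridge hp (SimpleGraph.isAcyclic_iff_forall_isBridge.1 hG e.2)
  exact LinearIndependent.of_pairwise_dual_eq_zero_one _ φ
    (fun e f hef => hφ_other e f f.2 fun h => hef (Subtype.ext h.symm)) hφ_self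

lemma isAcyclic_of_linearIndepOn_edgeSet {G : SimpleGraph V}
    (hG : LinearIndepOn (ZMod 2) (fun e => (e.map p).add) G.edgeSet) : G.IsAcyclic := by
  classical
  intro u w hw
  have hsum : ∑ e ∈ w.edges.toFinset, (e.map p).add = 0 := by
    rw [List.sum_toFinset _ hw.edges_nodup, sum_map_edges_eq_add, ZModModule.add_self]
  have hsub : (w.edges.toFinset : Set (Sym2 V)) ⊆ G.edgeSet := fun e he =>
    w.edges_subset_edgeSet (List.mem_toFinset.1 he)
  have hempty := linearIndepOn_zmodTwo_iff.1 hG _ hsub hsum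
  exact hw.not_nil (by simpa using hempty)

lemma edgeSet_fromEdgeSet_of_forall_not_isDiag {E : Set (Sym2 V)} (hE : ∀ e ∈ E, ¬ e.IsDiag) :
    (SimpleGraph.fromEdgeSet E).edgeSet = E := by
  rw [SimpleGraph.edgeSet_fromEdgeSet, sdiff_eq_left, Set.disjoint_left]
  exact hE

theorem linearIndepOn_iff_isAcyclic_fromEdgeSet_image {ι : Type*}
    (hp : AffineIndependent (ZMod 2) p) {ψ : ι → Sym2 V} (hψ : ψ.Injective)
    (hdiag : ∀ i, ¬ (ψ i).IsDiag) (X : Set ι) :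
    LinearIndepOn (ZMod 2) (fun i => ((ψ i).map p).add) X ↔
      (SimpleGraph.fromEdgeSet (ψ '' X)).IsAcyclic := by
  have hedge := edgeSet_fromEdgeSet_of_forall_not_isDiag
    (Set.forall_mem_image.2 fun i (_ : i ∈ X) => hdiag i)
  calc LinearIndepOn (ZMod 2) (fun i => ((ψ i).map p).add) X
      ↔ LinearIndepOn (ZMod 2) (fun e : Sym2 V => (e.map p).add) (ψ '' X) :=
        ⟨fun h => h.image_of_comp ψ _, fun h => h.comp_of_image (f := ψ) hψ.injOn⟩
    _ ↔ (SimpleGraph.fromEdgeSet (ψ '' X)).IsAcyclic := by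
        rw [← hedge, SimpleGraph.fromEdgeSet_edgeSet]
        exact ⟨isAcyclic_of_linearIndepOn_edgeSet, linearIndepOn_edgeSet_of_isAcyclic hp⟩

end GraphicRepresentations

lemma card_le_choose_two_of_injective {ι V : Type*} [Fintype ι] [Fintype V] {ψ : ι → Sym2 V}
    (hψ : ψ.Injective) (hdiag : ∀ i, ¬ (ψ i).IsDiag) :
    Fintype.card ι ≤ (Fintype.card V).choose 2 := by
  classical
  rw [← Sym2.card_subtype_not_diag]
  exact Fintype.card_le_of_injective (fun i => ⟨ψ i, hdiag i⟩)
    fun i j hij => hψ (congrArg Subtype.val hij)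

section Segments

/-- The vector `(1, …, 1, 0, …, 0)` with `i` leading ones. These vectors represent the vertices of
the complete graph on `Fin n`: the coding vector `chi n s(i, j)` is the sum of those at `i`
and `j`. -/
def prefixVec (n : ℕ) (i : Fin n) : Fin (n - 1) → ZMod 2 := fun k => if k.val < i.val then 1 else 0

lemma chi_eq_add_prefixVec (n : ℕ) (e : Sym2 (Fin n)) : chi n e = (e.map (prefixVec n)).add := by
  induction e with
  | h i j =>
    funext k
    have one_add_one : (1 : ZMod 2) + 1 = 0 := by decide
    simp only [chi, Sym2.lift_mk, Sym2.map_mk, Sym2.add_mk, Pi.add_apply, prefixVec]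
    split_ifs <;> first | omega | simp [one_add_one]

lemma prefixVec_succ_sub_castSucc {N : ℕ} (k : Fin N) :
    prefixVec (N + 1) k.succ - prefixVec (N + 1) k.castSucc = Pi.single k 1 := by
  funext l
  have hlk : l = k ↔ l.val = k.val := Fin.ext_iff
  simp only [prefixVec, Pi.sub_apply, Pi.single_apply, Fin.val_succ, Fin.val_castSucc, hlk]
  split_ifs <;> first | omega | simp

lemma affineIndependent_prefixVec (n : ℕ) : AffineIndependent (ZMod 2) (prefixVec n) := by
  cases n with
  | zero => exact affineIndependent_of_subsingleton _ _
  | succ N =>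
    have vectorSpan_eq_top : vectorSpan (ZMod 2) (Set.range (prefixVec (N + 1))) = ⊤ := by
      rw [eq_top_iff, ← (Pi.basisFun (ZMod 2) (Fin N)).span_eq, Submodule.span_le]
      rintro _ ⟨k, rfl⟩
      rw [Pi.basisFun_apply, ← prefixVec_succ_sub_castSucc]
      exact vsub_mem_vectorSpan _ (Set.mem_range_self _) (Set.mem_range_self _)
    rw [affineIndependent_iff_finrank_vectorSpan_eq _ _ (Fintype.card_fin _), vectorSpan_eq_top,
      finrank_top]
    exact Module.finrank_fin_fun _

lemma chi_mk_eq_one_iff {n : ℕ} (i j : Fin n) (k : Fin (n - 1)) :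
    chi n s(i, j) k = 1 ↔ min i.val j.val ≤ k.val ∧ k.val < max i.val j.val := by
  simp only [chi, Sym2.lift_mk, ite_eq_left_iff, zero_ne_one, imp_false, not_not]

lemma chi_mem_Cseg {n : ℕ} {e : Sym2 (Fin n)} (he : ¬ e.IsDiag) : chi n e ∈ Cseg (n - 1) := by
  induction e with
  | h i j =>
    refine ⟨fun h => ?_, _, _, chi_mk_eq_one_iff i j⟩
    have hij : i.val ≠ j.val := fun h => he (Sym2.mk_isDiag_iff.2 (Fin.ext h))
    have hmin : chi n s(i, j) ⟨min i.val j.val, by omega⟩ = 1 :=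
      (chi_mk_eq_one_iff i j _).2 ⟨le_rfl, min_lt_max.2 hij⟩
    exact zero_ne_one ((congrFun h _).symm.trans hmin)

lemma exists_chi_eq_of_mem_Cseg {n : ℕ} {v : Fin (n - 1) → ZMod 2} (hv : v ∈ Cseg (n - 1)) :
    ∃ e : Sym2 (Fin n), ¬ e.IsDiag ∧ chi n e = v := by
  obtain ⟨hv_ne, a, b, hab⟩ := hv
  obtain ⟨k, hk⟩ := Function.ne_iff.1 hv_ne
  have hak := (hab k).1 (Fin.eq_one_of_ne_zero _ hk)
  refine ⟨s(⟨a, by omega⟩, ⟨min b (n - 1), by omega⟩), ?_, funext fun l => ?_⟩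
  · rw [Sym2.mk_isDiag_iff, Fin.mk.injEq]
    omega
  · have eq_of_eq_one_iff : ∀ x y : ZMod 2, (x = 1 ↔ y = 1) → x = y := by decide
    refine eq_of_eq_one_iff _ _ ?_
    rw [chi_mk_eq_one_iff, hab]
    dsimp only
    omega

theorem forall_linearIndepOn_iff_isAcyclic_iff {ι : Type*} {n : ℕ} {a : ι → Fin (n - 1) → ZMod 2}
    {ψ : ι → Sym2 (Fin n)} (hψ : ψ.Injective) (hdiag : ∀ i, ¬ (ψ i).IsDiag) :
    (∀ X : Set ι, LinearIndepOn (ZMod 2) a X ↔ (SimpleGraph.fromEdgeSet (ψ '' X)).IsAcyclic) ↔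
      ∃ P : Matrix (Fin (n - 1)) (Fin (n - 1)) (ZMod 2),
        IsUnit P ∧ ∀ i, P.mulVec (a i) = chi n (ψ i) := by
  simp only [← linearIndepOn_iff_isAcyclic_fromEdgeSet_image (affineIndependent_prefixVec n)
    hψ hdiag, ← chi_eq_add_prefixVec, forall_linearIndepOn_iff_iff_exists_linearEquiv_s13,
    exists_linearEquiv_iff_exists_isUnit_mulVec]

end Segments

theorem stmt13 (n m : ℕ) (hn : 2 ≤ n) (A : Matrix (Fin (n - 1)) (Fin m) (ZMod 2))
    (h0 : ∀ j, A.transpose j ≠ 0) (hinj : Function.Injective A.transpose) :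
    (∃ (G : SimpleGraph (Fin n)) (ψ : Fin m → Sym2 (Fin n)),
        Function.Injective ψ ∧ Set.range ψ = G.edgeSet ∧
          ∀ X : Set (Fin m),
            (LinearIndependent (ZMod 2) (fun x : X => A.transpose x.val) ↔
              (SimpleGraph.fromEdgeSet (ψ '' X)).IsAcyclic)) ↔
      (m ≤ n * (n - 1) / 2 ∧
        ∃ P : Matrix (Fin (n - 1)) (Fin (n - 1)) (ZMod 2),
          IsUnit P ∧ ∀ j, (P * A).transpose j ∈ Cseg (n - 1)) := by
  constructor
  · rintro ⟨G, ψ, hψ, hrange, hX⟩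
    have hdiag (j : Fin m) : ¬ (ψ j).IsDiag :=
      G.not_isDiag_of_mem_edgeSet (hrange ▸ Set.mem_range_self j)
    obtain ⟨P, hP, hPA⟩ := (forall_linearIndepOn_iff_isAcyclic_iff hψ hdiag).1 hX
    refine ⟨?_, P, hP, fun j => ?_⟩
    · simpa [Nat.choose_two_right] using card_le_choose_two_of_injective hψ hdiag
    · rw [show (P * A).transpose j = P.mulVec (A.transpose j) from rfl, hPA]
      exact chi_mem_Cseg (hdiag j)
  · rintro ⟨-, P, hP, hC⟩
    choose ψ hdiag hPA using fun j => exists_chi_eq_of_mem_Cseg (hC j)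
    have hψ : ψ.Injective := fun i j hij =>
      hinj (Matrix.mulVec_injective_of_isUnit hP ((hPA i).symm.trans (hij ▸ hPA j)))
    refine ⟨SimpleGraph.fromEdgeSet (Set.range ψ), ψ, hψ, ?_, ?_⟩
    · exact (edgeSet_fromEdgeSet_of_forall_not_isDiag (Set.forall_mem_range.2 hdiag)).symm
    · exact (forall_linearIndepOn_iff_isAcyclic_iff hψ hdiag).2 ⟨P, hP, fun j => (hPA j).symm⟩
end
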